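/- Let d = 2, k = 1, T = 2, A* = 0 ∈ ℝ^{2×2}, u₁* = e₁ and u₂* = e₂ (the standard basis vectors of ℝ²). For every θ ∈ ℝ, set u₁(θ) = (cosh θ, sinh θ)ᵀ, u₂(θ) = (sinh θ, cosh θ)ᵀ, and A(θ) = (1/2)·(I₂ − u₁(θ)u₁(θ)ᵀ − u₂(θ)u₂(θ)ᵀ). Then the two-task Meta-LoRA loss satisfies 𝓛(A(θ), u₁(θ), u₂(θ)) = 0 for every θ ∈ ℝ, and the map θ ↦ A(θ) is injective; in particular, the set of global minimizers of 𝓛 is infinite. -/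

import Mathlib

open Matrix BigOperators

noncomputable section

/-- Squared Frobenius norm of a real matrix. -/
def frobSq {m n : Type*} [Fintype m] [Fintype n] (M : Matrix m n ℝ) : ℝ :=
  ∑ i, ∑ j, (M i j) ^ 2

/-!
If `(x, y)` is obtained from `(v, w)` by a hyperbolic rotation, then `x xᵀ - y yᵀ = v vᵀ - w wᵀ`,
because `cosh² - sinh² = 1`. The error made by the two adapters is therefore the same for both
tasks, and the shared matrix can absorb it, so that the loss vanishes. The shared matrix still
remembers the angle `θ`, since `x xᵀ + y yᵀ` contains `v wᵀ + w vᵀ` with coefficient `sinh (2 * θ)`.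
-/

section FrobSq

variable {m n : Type*} [Fintype m] [Fintype n]

theorem frobSq_nonneg (M : Matrix m n ℝ) : 0 ≤ frobSq M :=
  Finset.sum_nonneg fun _ _ => Finset.sum_nonneg fun _ _ => sq_nonneg _

theorem frobSq_eq_zero_iff {M : Matrix m n ℝ} : frobSq M = 0 ↔ M = 0 := by
  have row_nonneg (i : m) : 0 ≤ ∑ j, M i j ^ 2 := Finset.sum_nonneg fun _ _ => sq_nonneg _
  simp [frobSq, Finset.sum_eq_zero_iff_of_nonneg, row_nonneg, sq_nonneg, ← Matrix.ext_iff]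

end FrobSq

section HyperbolicRotation

variable {R n : Type*} [CommRing R]

theorem vecMulVec_self_sub_vecMulVec_self_swap (c s : R) (v w : n → R) :
    vecMulVec (c • v + s • w) (c • v + s • w) - vecMulVec (s • v + c • w) (s • v + c • w) =
      (c ^ 2 - s ^ 2) • (vecMulVec v v - vecMulVec w w) := by
  simp only [add_vecMulVec, vecMulVec_add, smul_vecMulVec, vecMulVec_smul]
  module

theorem vecMulVec_self_add_vecMulVec_self_swap (c s : R) (v w : n → R) :
    vecMulVec (c • v + s • w) (c • v + s • w) + vecMulVec (s • v + c • w) (s • v + c • w) =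
      (c ^ 2 + s ^ 2) • (vecMulVec v v + vecMulVec w w) +
        (2 * s * c) • (vecMulVec v w + vecMulVec w v) := by
  simp only [add_vecMulVec, vecMulVec_add, smul_vecMulVec, vecMulVec_smul]
  module

theorem linearIndependent_pair_vecMulVec {v w : n → R} (h : LinearIndependent R ![v, w]) :
    LinearIndependent R
      ![vecMulVec v v + vecMulVec w w, vecMulVec v w + vecMulVec w v] := by
  rw [LinearIndependent.pair_iff] at h ⊢
  intro a b hab
  have column_eq_zero (j : n) : (a * v j + b * w j) • v + (a * w j + b * v j) • w = 0 := by
    ext i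
    have entry := congrFun₂ hab i j
    simp only [Matrix.add_apply, Matrix.smul_apply, vecMulVec_apply, Matrix.zero_apply,
      smul_eq_mul, Pi.add_apply, Pi.smul_apply, Pi.zero_apply] at entry ⊢
    linear_combination entry
  exact h a b (funext fun j => (h _ _ (column_eq_zero j)).1)

end HyperbolicRotation

section TwoTaskLoss

variable {n : Type*}

/-- The two-task Meta-LoRA loss at `(A, x, y)` with rank-one symmetric adapters, where the
ground truth consists of the shared matrix `B` and the adapters `v`, `w`. -/
def twoTaskLoss [Fintype n] (B : Matrix n n ℝ) (v w : n → ℝ)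
    (p : Matrix n n ℝ × (n → ℝ) × (n → ℝ)) : ℝ :=
  (1 / 2) * (frobSq (B + vecMulVec v v - p.1 - vecMulVec p.2.1 p.2.1) +
    frobSq (B + vecMulVec w w - p.1 - vecMulVec p.2.2 p.2.2))

theorem twoTaskLoss_nonneg [Fintype n] (B : Matrix n n ℝ) (v w : n → ℝ)
    (p : Matrix n n ℝ × (n → ℝ) × (n → ℝ)) : 0 ≤ twoTaskLoss B v w p :=
  mul_nonneg (by norm_num) (add_nonneg (frobSq_nonneg _) (frobSq_nonneg _))

theorem twoTaskLoss_eq_zero_iff [Fintype n] {B A : Matrix n n ℝ} {v w x y : n → ℝ} :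
    twoTaskLoss B v w (A, x, y) = 0 ↔
      A = B + (1 / 2 : ℝ) • (vecMulVec v v + vecMulVec w w - vecMulVec x x - vecMulVec y y) ∧
        vecMulVec x x - vecMulVec y y = vecMulVec v v - vecMulVec w w := by
  have residuals_eq_zero : twoTaskLoss B v w (A, x, y) = 0 ↔
      B + vecMulVec v v - A - vecMulVec x x = 0 ∧ B + vecMulVec w w - A - vecMulVec y y = 0 := by
    simp [twoTaskLoss, add_eq_zero_iff_of_nonneg, frobSq_nonneg, frobSq_eq_zero_iff]
  rw [residuals_eq_zero]
  constructor
  · rintro ⟨hx, hy⟩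
    exact ⟨by linear_combination (norm := module) (-1 / 2 : ℝ) • hx + (-1 / 2 : ℝ) • hy,
      by linear_combination (norm := module) hy - hx⟩
  · rintro ⟨rfl, hxy⟩
    exact ⟨by linear_combination (norm := module) (-1 / 2 : ℝ) • hxy,
      by linear_combination (norm := module) (1 / 2 : ℝ) • hxy⟩

/-- The point with parameter `θ` on the curve of global minimizers of `twoTaskLoss B v w`:
its adapters are the hyperbolic rotation of `(v, w)` by `θ`, and its shared matrix is the one
forced by `twoTaskLoss_eq_zero_iff`. -/
def hyperbolicMinimizer (B : Matrix n n ℝ) (v w : n → ℝ) (θ : ℝ) :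
    Matrix n n ℝ × (n → ℝ) × (n → ℝ) :=
  let x := Real.cosh θ • v + Real.sinh θ • w
  let y := Real.sinh θ • v + Real.cosh θ • w
  (B + (1 / 2 : ℝ) • (vecMulVec v v + vecMulVec w w - vecMulVec x x - vecMulVec y y), x, y)

theorem twoTaskLoss_hyperbolicMinimizer [Fintype n] (B : Matrix n n ℝ) (v w : n → ℝ) (θ : ℝ) :
    twoTaskLoss B v w (hyperbolicMinimizer B v w θ) = 0 := by
  refine twoTaskLoss_eq_zero_iff.mpr ⟨rfl, ?_⟩
  rw [vecMulVec_self_sub_vecMulVec_self_swap, Real.cosh_sq_sub_sinh_sq, one_smul]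

theorem hyperbolicMinimizer_fst (B : Matrix n n ℝ) (v w : n → ℝ) (θ : ℝ) :
    (hyperbolicMinimizer B v w θ).1 = B + (1 / 2 : ℝ) • (vecMulVec v v + vecMulVec w w -
      (Real.cosh (2 * θ) • (vecMulVec v v + vecMulVec w w) +
        Real.sinh (2 * θ) • (vecMulVec v w + vecMulVec w v))) := by
  rw [Real.cosh_two_mul, Real.sinh_two_mul, ← vecMulVec_self_add_vecMulVec_self_swap, ← sub_sub]
  rfl

theorem hyperbolicMinimizer_fst_injective (B : Matrix n n ℝ) {v w : n → ℝ}
    (h : LinearIndependent ℝ ![v, w]) :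
    Function.Injective fun θ => (hyperbolicMinimizer B v w θ).1 := by
  intro a b hab
  simp only [hyperbolicMinimizer_fst] at hab
  have rotated_eq :=
    sub_right_injective (smul_right_injective _ (by norm_num) (add_left_cancel hab))
  have sinh_eq : Real.sinh (2 * a) = Real.sinh (2 * b) :=
    ((linearIndependent_pair_vecMulVec h).eq_of_pair rotated_eq).2
  exact mul_left_cancel₀ two_ne_zero (Real.sinh_injective sinh_eq)

theorem metaLoRA_two_task_nonunique_minima_general [Fintype n] (B : Matrix n n ℝ) {v w : n → ℝ}
    (h : LinearIndependent ℝ ![v, w]) :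
    (∀ θ, twoTaskLoss B v w (hyperbolicMinimizer B v w θ) = 0) ∧
    (Function.Injective fun θ => (hyperbolicMinimizer B v w θ).1) ∧
    {p | ∀ q, twoTaskLoss B v w p ≤ twoTaskLoss B v w q}.Infinite := by
  have hinj := hyperbolicMinimizer_fst_injective B h
  refine ⟨twoTaskLoss_hyperbolicMinimizer B v w, hinj,
    Set.infinite_of_injective_forall_mem (Function.Injective.of_comp (f := Prod.fst) hinj)
      fun θ q => ?_⟩
  exact (twoTaskLoss_hyperbolicMinimizer B v w θ).trans_le (twoTaskLoss_nonneg B v w q)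

end TwoTaskLoss

section StandardBasis

variable {R : Type*} [Semiring R]

theorem linearIndependent_pair_stdBasis : LinearIndependent R ![![(1 : R), 0], ![0, 1]] := by
  simp [LinearIndependent.pair_iffₛ]

theorem smul_stdBasis_add_smul_stdBasis (a b : R) : a • ![1, 0] + b • ![0, 1] = ![a, b] := by
  simp

theorem vecMulVec_stdBasis_add_vecMulVec_stdBasis :
    vecMulVec ![(1 : R), 0] ![1, 0] + vecMulVec ![0, 1] ![0, 1] = 1 := by
  ext i j
  fin_cases i <;> fin_cases j <;> simp

end StandardBasis

/-- Non-uniqueness of global minima for `T = 2`: with `d = 2`, `k = 1`, `A* = 0`,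
`u₁* = e₁`, `u₂* = e₂`, the hyperbola
`u₁(θ) = (cosh θ, sinh θ)`, `u₂(θ) = (sinh θ, cosh θ)`,
`A(θ) = (1/2)(I₂ − u₁(θ)u₁(θ)ᵀ − u₂(θ)u₂(θ)ᵀ)` consists of global minimizers of the
two-task Meta-LoRA loss: the loss is `0` along it, `θ ↦ A(θ)` is injective, and the set
of global minimizers is infinite. -/
theorem metaLoRA_two_task_nonunique_minima
    (L : Matrix (Fin 2) (Fin 2) ℝ × (Fin 2 → ℝ) × (Fin 2 → ℝ) → ℝ)
    (hL : ∀ p, L p = (1 / 2) *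
      (frobSq ((0 : Matrix (Fin 2) (Fin 2) ℝ) + vecMulVec ![(1 : ℝ), 0] ![(1 : ℝ), 0]
          - p.1 - vecMulVec p.2.1 p.2.1) +
       frobSq ((0 : Matrix (Fin 2) (Fin 2) ℝ) + vecMulVec ![(0 : ℝ), 1] ![(0 : ℝ), 1]
          - p.1 - vecMulVec p.2.2 p.2.2)))
    (u₁ u₂ : ℝ → Fin 2 → ℝ)
    (hu₁ : ∀ θ, u₁ θ = ![Real.cosh θ, Real.sinh θ])
    (hu₂ : ∀ θ, u₂ θ = ![Real.sinh θ, Real.cosh θ])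
    (A : ℝ → Matrix (Fin 2) (Fin 2) ℝ)
    (hA : ∀ θ, A θ = ((1 : ℝ) / 2) •
      ((1 : Matrix (Fin 2) (Fin 2) ℝ) - vecMulVec (u₁ θ) (u₁ θ) - vecMulVec (u₂ θ) (u₂ θ))) :
    (∀ θ : ℝ, L (A θ, u₁ θ, u₂ θ) = 0) ∧
    Function.Injective A ∧
    {p : Matrix (Fin 2) (Fin 2) ℝ × (Fin 2 → ℝ) × (Fin 2 → ℝ) |
        ∀ q, L p ≤ L q}.Infinite := by
  obtain rfl : L = twoTaskLoss 0 ![1, 0] ![0, 1] := funext hL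
  have curve_eq (θ : ℝ) : hyperbolicMinimizer 0 ![1, 0] ![0, 1] θ = (A θ, u₁ θ, u₂ θ) := by
    simp only [hyperbolicMinimizer, smul_stdBasis_add_smul_stdBasis,
      vecMulVec_stdBasis_add_vecMulVec_stdBasis, zero_add, hA, hu₁, hu₂]
  simpa only [curve_eq] using
    metaLoRA_two_task_nonunique_minima_general 0 linearIndependent_pair_stdBasis
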